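/- Let n ≥ 3, k an integer with 1 < k < n/2, and p > nk/(n-2k). Let u be a regular solution of the initial value problem -(1/k)·C(n-1,k-1)·(r^{n-k}|u'|^{k-1}u')' = r^{n-1}u^p, u > 0, u'(0) = 0, u(0) = ρ > 0. If u(r) = o(r^{-2k/(p-k)}) as r → ∞, then u(r) = O(r^{(2k-n)/k}) as r → ∞. -/

import Mathlib

open MeasureTheory Real Set Filter Asymptotics

noncomputable section

namespace KHessianPaper

/-- The binomial coefficient `C(n-1, k-1)` as a real number. -/
def binomC (n k : ℕ) : ℝ := ((n - 1).choose (k - 1) : ℝ)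

/-- The flux `w(r) = r^{n-k} |u'(r)|^{k-1} u'(r)`. -/
def flux (n k : ℕ) (u : ℝ → ℝ) (r : ℝ) : ℝ :=
  r ^ (n - k) * |deriv u r| ^ (k - 1) * deriv u r

/-- `u` is a regular solution of the radial `k`-Hessian initial value problem
`-(1/k) C(n-1,k-1) (r^{n-k} |u'|^{k-1} u')' = r^{n-1} u^p`, `u > 0`, `u'(0) = 0`, `u(0) = ρ`. -/
structure IsRegularSolution (n k : ℕ) (p ρ : ℝ) (u : ℝ → ℝ) : Prop where
  contDiffOn : ContDiffOn ℝ 1 u (Ici 0)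
  deriv_zero : derivWithin u (Ici 0) 0 = 0
  init : u 0 = ρ
  pos : ∀ r : ℝ, 0 ≤ r → 0 < u r
  eqn : ∀ r : ℝ, 0 < r →
    HasDerivAt (flux n k u) (-((k : ℝ) / binomC n k) * r ^ (n - 1) * u r ^ p) r
  radial_smooth : ContDiff ℝ 2 (fun x : EuclideanSpace ℝ (Fin n) => -u ‖x‖)

/-- `φ : [0,∞) → ℝ` is the radial profile of a smooth compactly supported function on `ℝⁿ`. -/
def MemWStar (n : ℕ) (φ : ℝ → ℝ) : Prop :=
  ∃ Φ : EuclideanSpace ℝ (Fin n) → ℝ,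
    ContDiff ℝ (⊤ : ℕ∞) Φ ∧ HasCompactSupport Φ ∧ ∀ x, Φ x = φ ‖x‖

/-- The weak form of the equation tested against `φ`. -/
def WeakEqn (n k : ℕ) (p : ℝ) (u φ : ℝ → ℝ) : Prop :=
  ∫ r in Ioi (0 : ℝ),
      ((1 / (k : ℝ)) * binomC n k * r ^ (n - k) * |deriv u r| ^ (k - 1) * deriv u r
          * deriv φ r
        - r ^ (n - 1) * u r ^ p * φ r) = 0

/-- The second-variation quadratic form `Q_u(φ)`. -/
def Qform (n k : ℕ) (p : ℝ) (u φ : ℝ → ℝ) : ℝ :=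
  binomC n k * ∫ r in Ioi (0 : ℝ), r ^ (n - k) * |deriv u r| ^ (k - 1) * (deriv φ r) ^ 2
    - p * ∫ r in Ioi (0 : ℝ), r ^ (n - 1) * u r ^ (p - 1) * (φ r) ^ 2

/-- `u` is a positive stable solution of the radial `k`-Hessian equation. -/
def IsStableSolution (n k : ℕ) (p : ℝ) (u : ℝ → ℝ) : Prop :=
  (∀ r : ℝ, 0 < r → 0 < u r) ∧ ContDiffOn ℝ 1 u (Ioi 0) ∧
  (∀ φ, MemWStar n φ → WeakEqn n k p u φ) ∧
  (∀ φ, MemWStar n φ → 0 ≤ Qform n k p u φ)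

/-- `u` is a positive stable solution on `(R,∞)` of the radial `k`-Hessian equation. -/
def IsStableSolutionOn (n k : ℕ) (p : ℝ) (R : ℝ) (u : ℝ → ℝ) : Prop :=
  (∀ r : ℝ, 0 < r → 0 < u r) ∧ ContDiffOn ℝ 1 u (Ioi 0) ∧
  (∀ φ, MemWStar n φ → WeakEqn n k p u φ) ∧
  (∀ φ : ℝ → ℝ, ContDiff ℝ (⊤ : ℕ∞) φ → HasCompactSupport φ → tsupport φ ⊆ Ioi R →
    0 ≤ Qform n k p u φ)

/-- The constant `A` in the singular solution `u_s(r) = A r^{-2k/(p-k)}`. -/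
def Aconst (n k : ℕ) (p : ℝ) : ℝ :=
  ((1 / (k : ℝ)) * binomC n k) ^ (1 / (p - k))
    * (2 * (k : ℝ) / (p - (k : ℝ))) ^ ((k : ℝ) / (p - k))
    * ((n : ℝ) - 2 * p * k / (p - k)) ^ (1 / (p - k))

/-- The singular solution `u_s(r) = A r^{-2k/(p-k)}`. -/
def uSing (n k : ℕ) (p : ℝ) (r : ℝ) : ℝ := Aconst n k p * r ^ (-(2 * (k : ℝ) / (p - k)))

/-- The Joseph–Lundgren exponent (finite form, relevant when `n > 2k+8`). -/
def pJL (n k : ℕ) : ℝ :=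
  ((k : ℝ) * ((n : ℝ) ^ 2 - 2 * ((k : ℝ) + 3) * (n : ℝ) + 4 * (k : ℝ))
      + 4 * (k : ℝ) * Real.sqrt (2 * ((k : ℝ) + 1) * (n : ℝ) - 4 * (k : ℝ)))
    / (((n : ℝ) - 2 * (k : ℝ)) * ((n : ℝ) - 2 * (k : ℝ) - 8))

/-- The exponent `p* = k(n+2k)/(n-2k)`. -/
def pStar (n k : ℕ) : ℝ := (k : ℝ) * ((n : ℝ) + 2 * (k : ℝ)) / ((n : ℝ) - 2 * (k : ℝ))

/-!
Put `d = n - 2k`, `α = 2k/(p-k)`, `c = k/C(n-1,k-1)`, and let `y = -r u'/u` be the logarithmic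
slope of `u`, so that `u ~ r^{-m}` corresponds to `y = m`. The equation becomes the Riccati equation
`r (y^k)' = c r^{2k} u^{p-k} - y^k (d - k y)`, and `u = o(r^{-α})` says exactly that the forcing
term `r^{2k} u^{p-k}` tends to `0`. The unforced equation has the fixed points `y = 0` and
`y = d/k`. If `y` were below some `m < d/k` at a late time, it would be driven towards `0` and
end below `α`, so that `r^{-α} = O(u)`, contradicting `u = o(r^{-α})`. Hence `y ≥ m` eventually and
`u = O(r^{-m})` for every `m < d/k`. Choosing `m > n/p` makes the derivative of the flux
integrable, so the flux is bounded, `u' = O(r^{-d/k-1})`, and one integration gives the claim.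
-/

/-! ### Power bounds at infinity -/

lemma lt_mul_div_sub_two_mul {n k : ℝ} (hk : 0 < k) (hkn : 2 * k < n) :
    k < n * k / (n - 2 * k) := by
  rw [lt_div_iff₀ (sub_pos.2 hkn)]
  linarith [mul_pos hk hk]

lemma isBigO_rpow_rpow_atTop {a b : ℝ} (hab : a ≤ b) :
    (fun r : ℝ => r ^ a) =O[atTop] fun r : ℝ => r ^ b := by
  refine IsBigO.of_norm_eventuallyLE ?_
  filter_upwards [eventually_ge_atTop 1] with r hr
  rw [norm_of_nonneg (by positivity)]
  exact rpow_le_rpow_of_exponent_le hr hab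

lemma hasDerivAt_const_sub_rpow_neg {s r : ℝ} (C a : ℝ) (hs : s ≠ 0) (hr : r ≠ 0) :
    HasDerivAt (fun t : ℝ => C / s * (a - t ^ (-s))) (C * r ^ (-s - 1)) r := by
  refine (((hasDerivAt_rpow_const (Or.inl hr)).const_sub a).const_mul (C / s)).congr_deriv ?_
  field_simp

lemma isBoundedUnder_le_of_deriv_le {f g : ℝ → ℝ} {s : ℝ} (hs : 0 < s)
    (hf : ∀ᶠ r in atTop, DifferentiableAt ℝ f r) (hfg : ∀ᶠ r in atTop, deriv f r ≤ g r)
    (hg : g =O[atTop] fun r : ℝ => r ^ (-s - 1)) : IsBoundedUnder (· ≤ ·) atTop f := by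
  obtain ⟨C, hC, hgC⟩ := hg.exists_pos
  obtain ⟨R, hR⟩ := (((eventually_gt_atTop 0).and hf).and
    (hfg.and hgC.bound)).exists_forall_of_atTop
  have hB := fun r (hr : R ≤ r) =>
    (hasDerivAt_const_sub_rpow_neg C (R ^ (-s)) hs.ne' (hR r hr).1.1.ne').const_add (f R)
  refine isBoundedUnder_of_eventually_le (a := f R + C / s * R ^ (-s)) ?_
  filter_upwards [eventually_ge_atTop R] with r hr
  have hr0 : 0 < r := (hR r hr).1.1
  have hle : f r ≤ f R + C / s * (R ^ (-s) - r ^ (-s)) := by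
    refine image_le_of_deriv_right_le_deriv_boundary
      (fun t ht => (hR t ht.1).1.2.continuousAt.continuousWithinAt)
      (fun t ht => (hR t ht.1).1.2.hasDerivAt.hasDerivWithinAt) (by simp)
      (fun t ht => (hB t ht.1).continuousAt.continuousWithinAt)
      (fun t ht => (hB t ht.1).hasDerivWithinAt) (fun t ht => ?_) ⟨hr, le_rfl⟩
    obtain ⟨⟨ht0, -⟩, hdf, hgt⟩ := hR t ht.1
    rw [norm_of_nonneg (rpow_nonneg ht0.le _)] at hgt
    exact hdf.trans ((le_abs_self _).trans hgt)
  have hdrop : C / s * (R ^ (-s) - r ^ (-s)) ≤ C / s * R ^ (-s) := by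
    gcongr
    exact sub_le_self _ (rpow_nonneg hr0.le _)
  linarith

lemma isBigO_rpow_neg_of_deriv_isBigO {E : Type*} [NormedAddCommGroup E] [NormedSpace ℝ E]
    {f : ℝ → E} {s : ℝ} (hs : 0 < s) (hf : ∀ᶠ r in atTop, DifferentiableAt ℝ f r)
    (hf' : deriv f =O[atTop] fun r : ℝ => r ^ (-s - 1)) (hlim : Tendsto f atTop (nhds 0)) :
    f =O[atTop] fun r : ℝ => r ^ (-s) := by
  obtain ⟨C, hC, hfC⟩ := hf'.exists_pos
  obtain ⟨R, hR⟩ := (((eventually_gt_atTop 0).and hf).and hfC.bound).exists_forall_of_atTop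
  refine IsBigO.of_bound (C / s) ?_
  filter_upwards [eventually_ge_atTop R] with r hr
  have hr0 : 0 < r := (hR r hr).1.1
  have hB := fun t (ht : r ≤ t) =>
    hasDerivAt_const_sub_rpow_neg C (r ^ (-s)) hs.ne' (hR t (hr.trans ht)).1.1.ne'
  rw [norm_of_nonneg (rpow_nonneg hr0.le _)]
  have hlim' : Tendsto (fun x => ‖f x - f r‖) atTop (nhds ‖f r‖) := by
    simpa using (hlim.sub_const (f r)).norm
  refine le_of_tendsto hlim' ?_
  filter_upwards [eventually_ge_atTop r] with x hx
  have hle : ‖f x - f r‖ ≤ C / s * (r ^ (-s) - x ^ (-s)) := by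
    refine image_norm_le_of_norm_deriv_right_le_deriv_boundary' (f := fun t => f t - f r)
      (fun t ht => ((hR t (hr.trans ht.1)).1.2.sub_const _).continuousAt.continuousWithinAt)
      (fun t ht => ((hR t (hr.trans ht.1)).1.2.hasDerivAt.sub_const _).hasDerivWithinAt) (by simp)
      (fun t ht => (hB t ht.1).continuousAt.continuousWithinAt)
      (fun t ht => (hB t ht.1).hasDerivWithinAt) (fun t ht => ?_) ⟨hx, le_rfl⟩
    obtain ⟨⟨ht0, -⟩, hbound⟩ := hR t (hr.trans ht.1)
    rwa [norm_of_nonneg (rpow_nonneg ht0.le _)] at hbound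
  refine hle.trans ?_
  gcongr
  exact sub_le_self _ (rpow_nonneg (hr0.trans_le hx).le _)

lemma tendsto_rpow_mul_rpow_of_isLittleO {u : ℝ → ℝ} {s q : ℝ} (hq : 0 < q)
    (ho : u =o[atTop] fun r : ℝ => r ^ (-(s / q))) :
    Tendsto (fun r => r ^ s * u r ^ q) atTop (nhds 0) := by
  have hnonneg : (0 : ℝ → ℝ) ≤ᶠ[atTop] fun r : ℝ => r ^ (-(s / q)) := by
    filter_upwards [eventually_ge_atTop 0] with r hr using rpow_nonneg hr _
  refine (ho.rpow hq hnonneg).tendsto_div_nhds_zero.congr' ?_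
  filter_upwards [eventually_gt_atTop 0] with r hr
  rw [← rpow_mul hr.le, neg_mul, div_mul_cancel₀ _ hq.ne', rpow_neg hr.le, div_inv_eq_mul, mul_comm]

/-! ### The logarithmic slope -/

/-- The logarithmic slope `y = -d(log u)/d(log r)`, the Emden–Fowler variable of the problem; the
sign is chosen so that `u r = r ^ (-m)` has slope `m`. -/
def logSlope (u : ℝ → ℝ) (r : ℝ) : ℝ := -(r * logDeriv u r)

lemma logSlope_pos {u : ℝ → ℝ} {r : ℝ} (hr : 0 < r) (hu : 0 < u r) (hu' : deriv u r < 0) :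
    0 < logSlope u r :=
  neg_pos.2 (mul_neg_of_pos_of_neg hr (div_neg_of_neg_of_pos hu' hu))

lemma logSlope_inv {u : ℝ → ℝ} {r : ℝ} (hu : DifferentiableAt ℝ u r) :
    logSlope (fun t => (u t)⁻¹) r = -logSlope u r := by
  have h : logDeriv (fun t => u t ^ (-1 : ℤ)) r = (-1 : ℤ) * logDeriv u r :=
    logDeriv_fun_zpow hu (-1)
  simp only [zpow_neg_one] at h
  rw [logSlope, h, logSlope]
  push_cast
  ring

lemma hasDerivAt_mul_rpow {u : ℝ → ℝ} {r : ℝ} (m : ℝ) (hr : 0 < r) (hu : u r ≠ 0)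
    (hdu : DifferentiableAt ℝ u r) :
    HasDerivAt (fun t => u t * t ^ m) (u r * r ^ (m - 1) * (m - logSlope u r)) r := by
  refine (hdu.hasDerivAt.mul (hasDerivAt_rpow_const (Or.inl hr.ne'))).congr_deriv ?_
  rw [logSlope, logDeriv_apply, rpow_sub_one hr.ne']
  field_simp
  ring

lemma isBigO_rpow_neg_of_le_logSlope {u : ℝ → ℝ} {m : ℝ} (hpos : ∀ᶠ r in atTop, 0 < u r)
    (hdiff : ∀ᶠ r in atTop, DifferentiableAt ℝ u r) (hm : ∀ᶠ r in atTop, m ≤ logSlope u r) :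
    u =O[atTop] fun r : ℝ => r ^ (-m) := by
  obtain ⟨R, hR⟩ := (((eventually_gt_atTop 0).and hpos).and
    (hdiff.and hm)).exists_forall_of_atTop
  have hderiv := fun r (hr : R ≤ r) =>
    hasDerivAt_mul_rpow m (hR r hr).1.1 (hR r hr).1.2.ne' (hR r hr).2.1
  have hanti : AntitoneOn (fun r => u r * r ^ m) (Ici R) := by
    refine antitoneOn_of_hasDerivWithinAt_nonpos (convex_Ici R)
      (fun r hr => (hderiv r hr).continuousAt.continuousWithinAt)
      (fun r hr => (hderiv r (interior_subset hr)).hasDerivWithinAt) fun r hr => ?_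
    obtain ⟨⟨hr0, hur⟩, -, hmr⟩ := hR r (interior_subset hr)
    exact mul_nonpos_of_nonneg_of_nonpos (by positivity) (sub_nonpos.2 hmr)
  refine IsBigO.of_bound (u R * R ^ m) ?_
  filter_upwards [eventually_ge_atTop R] with r hr
  obtain ⟨hr0, hur⟩ := (hR r hr).1
  rw [norm_of_nonneg hur.le, norm_of_nonneg (by positivity), rpow_neg hr0.le, ← div_eq_mul_inv,
    le_div_iff₀ (by positivity)]
  exact hanti self_mem_Ici hr hr

lemma rpow_neg_isBigO_of_logSlope_le {u : ℝ → ℝ} {m : ℝ} (hpos : ∀ᶠ r in atTop, 0 < u r)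
    (hdiff : ∀ᶠ r in atTop, DifferentiableAt ℝ u r) (hm : ∀ᶠ r in atTop, logSlope u r ≤ m) :
    (fun r : ℝ => r ^ (-m)) =O[atTop] u := by
  have hinv : (fun r => (u r)⁻¹) =O[atTop] fun r : ℝ => r ^ (-(-m)) := by
    refine isBigO_rpow_neg_of_le_logSlope (hpos.mono fun r hr => inv_pos.2 hr) ?_ ?_
    · filter_upwards [hpos, hdiff] with r hur hdu using hdu.inv hur.ne'
    · filter_upwards [hdiff, hm] with r hdu hmr
      rw [logSlope_inv hdu]
      exact neg_le_neg hmr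
  have hrev := hinv.inv_rev (hpos.mono fun r hr h0 => absurd h0 (inv_ne_zero hr.ne'))
  refine hrev.congr' ?_ (.of_forall fun r => inv_inv (u r))
  filter_upwards [eventually_ge_atTop 0] with r hr
  rw [rpow_neg hr (-m), inv_inv]

/-- In logarithmic time the hypothesis reads `dY/dτ < κ (a - Y)` as long as `Y ≤ M`; the barrier is
the solution of the linear equation that starts at `M`. -/
lemma eventually_lt_of_mul_deriv_lt {Y : ℝ → ℝ} {a b M κ r₁ : ℝ} (hr₁ : 0 < r₁) (hκ : 0 < κ)
    (haM : a ≤ M) (hab : a < b) (hY : ∀ r ≥ r₁, DifferentiableAt ℝ Y r) (hY₁ : Y r₁ ≤ M)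
    (hlt : ∀ r ≥ r₁, Y r ≤ M → r * deriv Y r < κ * (a - Y r)) :
    ∀ᶠ r in atTop, Y r < b := by
  set B : ℝ → ℝ := fun r => a + (M - a) * r₁ ^ κ * r ^ (-κ) with hB
  have hB₁ : B r₁ = M := by
    simp only [hB, mul_assoc, ← rpow_add hr₁, add_neg_cancel, rpow_zero]
    ring
  have hBM : ∀ r ≥ r₁, B r ≤ M := fun r hr => by
    rw [← hB₁]
    have : 0 ≤ M - a := sub_nonneg.2 haM
    have : r ^ (-κ) ≤ r₁ ^ (-κ) := rpow_le_rpow_of_nonpos hr₁ hr (neg_nonpos.2 hκ.le)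
    simp only [hB]
    gcongr
  have hB' : ∀ r ≥ r₁, HasDerivAt B (κ * (a - B r) / r) r := fun r hr => by
    have hr0 : r ≠ 0 := (hr₁.trans_le hr).ne'
    refine (((hasDerivAt_rpow_const (Or.inl hr0)).const_mul _).const_add a).congr_deriv ?_
    rw [rpow_sub_one hr0]
    ring
  have hYB : ∀ r ≥ r₁, Y r ≤ B r := fun r hr => by
    refine image_le_of_deriv_right_lt_deriv_boundary'
      (fun t ht => (hY t ht.1).continuousAt.continuousWithinAt)
      (fun t ht => (hY t ht.1).hasDerivAt.hasDerivWithinAt) (hY₁.trans_eq hB₁.symm)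
      (fun t ht => (hB' t ht.1).continuousAt.continuousWithinAt)
      (fun t ht => (hB' t ht.1).hasDerivWithinAt) (fun t ht hYBt => ?_) ⟨hr, le_rfl⟩
    rw [lt_div_iff₀' (hr₁.trans_le ht.1), ← hYBt]
    exact hlt t ht.1 (hYBt.trans_le (hBM t ht.1))
  have hlim : Tendsto B atTop (nhds a) := by
    simpa using ((tendsto_rpow_neg_atTop hκ).const_mul ((M - a) * r₁ ^ κ)).const_add a
  filter_upwards [hlim.eventually_lt_const hab, eventually_ge_atTop r₁] with r hBr hr
  exact (hYB r hr).trans_lt hBr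

/-! ### The flux -/

section Flux

variable {n k : ℕ} {u : ℝ → ℝ} {r : ℝ}

lemma abs_flux (hk : 0 < k) (hr : 0 ≤ r) : |flux n k u r| = r ^ (n - k) * |deriv u r| ^ k := by
  rw [flux, abs_mul, abs_mul, abs_pow, abs_pow, abs_abs, abs_of_nonneg hr, mul_assoc,
    pow_sub_one_mul hk.ne']

lemma flux_neg_iff (hr : 0 < r) : flux n k u r < 0 ↔ deriv u r < 0 := by
  refine ⟨fun h => ?_, fun h => ?_⟩
  · by_contra! h'
    exact h.not_ge (by unfold flux; positivity)
  · have := abs_pos.2 h.ne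
    exact mul_neg_of_pos_of_neg (by positivity) h

lemma deriv_isBigO_of_flux_isBigO_one (hk : 0 < k) (hkn : k ≤ n)
    (h : flux n k u =O[atTop] fun _ => (1 : ℝ)) :
    deriv u =O[atTop] fun r : ℝ => r ^ (-(((n : ℝ) - k) / k)) := by
  have hk' : (k : ℝ) ≠ 0 := Nat.cast_ne_zero.2 hk.ne'
  obtain ⟨C, hC⟩ := h.bound
  refine IsBigO.of_pow hk.ne' (IsBigO.of_bound C ?_)
  filter_upwards [hC, eventually_gt_atTop 0] with r hCr hr
  have hpow : (r ^ (-(((n : ℝ) - k) / k))) ^ k = (r ^ (n - k))⁻¹ := by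
    rw [← rpow_mul_natCast hr.le, neg_mul, div_mul_cancel₀ _ hk', ← Nat.cast_sub hkn,
      rpow_neg hr.le, rpow_natCast]
  rw [Real.norm_eq_abs, abs_flux hk hr.le, norm_one, mul_one] at hCr
  rw [Pi.pow_apply, Pi.pow_apply, hpow, norm_pow, Real.norm_eq_abs, norm_of_nonneg (by positivity),
    ← div_eq_mul_inv, le_div_iff₀' (by positivity)]
  exact hCr

/-- The `k`-th power of the logarithmic slope of a decreasing `u`, written through the flux: `u'`
itself need not be differentiable, but the flux is. -/
def fluxRatio (n k : ℕ) (u : ℝ → ℝ) (r : ℝ) : ℝ := -flux n k u r / (r ^ (n - 2 * k) * u r ^ k)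

lemma fluxRatio_eq_logSlope_pow (hk : 0 < k) (hkn : 2 * k ≤ n) (hr : 0 < r) (hu : u r ≠ 0)
    (hu' : deriv u r < 0) : fluxRatio n k u r = logSlope u r ^ k := by
  rw [fluxRatio, ← abs_of_neg ((flux_neg_iff hr).2 hu'), abs_flux hk hr.le, abs_of_neg hu',
    logSlope, logDeriv_apply, ← mul_div_assoc, ← neg_div, ← mul_neg, div_pow, mul_pow,
    show n - k = n - 2 * k + k by omega, pow_add]
  field_simp

lemma differentiableAt_fluxRatio (hr : r ≠ 0) (hu : u r ≠ 0) (hdu : DifferentiableAt ℝ u r)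
    (hdw : DifferentiableAt ℝ (flux n k u) r) : DifferentiableAt ℝ (fluxRatio n k u) r :=
  hdw.neg.div ((differentiableAt_id.pow _).mul (hdu.pow _)) (by simp [hr, hu])

lemma mul_deriv_fluxRatio (hkn : 2 * k ≤ n) (hr : r ≠ 0) (hu : u r ≠ 0)
    (hdu : DifferentiableAt ℝ u r) (hw : flux n k u r ≠ 0)
    (hdw : DifferentiableAt ℝ (flux n k u) r) :
    r * deriv (fluxRatio n k u) r = r * -deriv (flux n k u) r / (r ^ (n - 2 * k) * u r ^ k)
      - fluxRatio n k u r * ((n : ℝ) - 2 * k - k * logSlope u r) := by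
  have hden : r ^ (n - 2 * k) * u r ^ k ≠ 0 := by positivity
  have hY : fluxRatio n k u r ≠ 0 := div_ne_zero (neg_ne_zero.2 hw) hden
  have hdpow : DifferentiableAt ℝ (fun t : ℝ => t ^ (n - 2 * k)) r := by fun_prop
  have hlogden : logDeriv (fun t => t ^ (n - 2 * k) * u t ^ k) r
      = ((n - 2 * k : ℕ) : ℝ) / r + k * logDeriv u r := by
    rw [← logDeriv_pow, ← logDeriv_fun_pow hdu]
    exact logDeriv_mul r (pow_ne_zero _ hr) (pow_ne_zero _ hu) hdpow (hdu.pow k)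
  have hlog : logDeriv (fluxRatio n k u) r = logDeriv (fun t => -flux n k u t) r
      - (((n - 2 * k : ℕ) : ℝ) / r + k * logDeriv u r) := by
    rw [← hlogden]
    exact logDeriv_div r (neg_ne_zero.2 hw) hden hdw.neg (hdpow.mul (hdu.pow k))
  rw [logDeriv_apply, div_eq_iff hY, logDeriv_apply, deriv.fun_neg] at hlog
  rw [hlog, logSlope, fluxRatio]
  push_cast [hkn]
  field_simp
  ring

end Flux

/-! ### Decreasing subsolutions near infinity -/

/-- `u` is positive and decreasing with a differentiable flux, and satisfies
`-(r^{n-k} |u'|^{k-1} u')' ≤ c r^{n-1} u^p`, all for large `r` only: the part of the notion of a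
regular solution that governs its decay. -/
structure IsDecreasingSubsolution (n k : ℕ) (p c : ℝ) (u : ℝ → ℝ) : Prop where
  eventually_pos : ∀ᶠ r in atTop, 0 < u r
  eventually_deriv_neg : ∀ᶠ r in atTop, deriv u r < 0
  eventually_differentiableAt_flux : ∀ᶠ r in atTop, DifferentiableAt ℝ (flux n k u) r
  eventually_neg_deriv_flux_le :
    ∀ᶠ r in atTop, -deriv (flux n k u) r ≤ c * (r ^ (n - 1) * u r ^ p)

namespace IsDecreasingSubsolution

variable {n k : ℕ} {p c : ℝ} {u : ℝ → ℝ}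

lemma eventually_differentiableAt (hu : IsDecreasingSubsolution n k p c u) :
    ∀ᶠ r in atTop, DifferentiableAt ℝ u r :=
  hu.eventually_deriv_neg.mono fun _ hr => differentiableAt_of_deriv_ne_zero hr.ne

lemma eventually_mul_deriv_fluxRatio_le (hu : IsDecreasingSubsolution n k p c u)
    (hkn : 2 * k < n) :
    ∀ᶠ r in atTop, r * deriv (fluxRatio n k u) r ≤ c * (r ^ (2 * (k : ℝ)) * u r ^ (p - k))
      - fluxRatio n k u r * ((n : ℝ) - 2 * k - k * logSlope u r) := by
  filter_upwards [hu.eventually_pos, hu.eventually_deriv_neg, hu.eventually_differentiableAt,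
    hu.eventually_differentiableAt_flux, hu.eventually_neg_deriv_flux_le, eventually_gt_atTop 0]
    with r hpos hneg hdu hdw hle hr
  rw [mul_deriv_fluxRatio hkn.le hr.ne' hpos.ne' hdu ((flux_neg_iff hr).2 hneg).ne hdw]
  gcongr
  have hrpow : r ^ (2 * (k : ℝ)) = r ^ (2 * k) := by
    rw [← rpow_natCast]
    push_cast
    rfl
  have hsplit : r ^ n = r ^ (2 * k) * r ^ (n - 2 * k) := by
    rw [← pow_add]
    congr 1
    omega
  calc r * -deriv (flux n k u) r / (r ^ (n - 2 * k) * u r ^ k)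
      ≤ r * (c * (r ^ (n - 1) * u r ^ p)) / (r ^ (n - 2 * k) * u r ^ k) := by gcongr
    _ = c * (r ^ n * u r ^ p) / (r ^ (n - 2 * k) * u r ^ k) := by
        rw [← mul_pow_sub_one (by omega : n ≠ 0) r]
        ring
    _ = c * (r ^ (2 * (k : ℝ)) * u r ^ (p - k)) := by
        rw [hrpow, rpow_sub_natCast hpos.ne', hsplit]
        field_simp

lemma eventually_logSlope_pos (hu : IsDecreasingSubsolution n k p c u) :
    ∀ᶠ r in atTop, 0 < logSlope u r := by
  filter_upwards [hu.eventually_pos, hu.eventually_deriv_neg, eventually_gt_atTop 0]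
    with r hpos hneg hr using logSlope_pos hr hpos hneg

lemma eventually_fluxRatio_eq_logSlope_pow (hu : IsDecreasingSubsolution n k p c u) (hk : 0 < k)
    (hkn : 2 * k ≤ n) : ∀ᶠ r in atTop, fluxRatio n k u r = logSlope u r ^ k := by
  filter_upwards [hu.eventually_pos, hu.eventually_deriv_neg, eventually_gt_atTop 0]
    with r hpos hneg hr using fluxRatio_eq_logSlope_pow hk hkn hr hpos.ne' hneg

lemma eventually_differentiableAt_fluxRatio (hu : IsDecreasingSubsolution n k p c u) :
    ∀ᶠ r in atTop, DifferentiableAt ℝ (fluxRatio n k u) r := by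
  filter_upwards [hu.eventually_pos, hu.eventually_differentiableAt,
    hu.eventually_differentiableAt_flux, eventually_ne_atTop 0]
    with r hpos hdu hdw hr using differentiableAt_fluxRatio hr hpos.ne' hdu hdw

lemma eventually_mul_deriv_fluxRatio_lt (hu : IsDecreasingSubsolution n k p c u) (hk : 0 < k)
    (hkn : 2 * k < n)
    (hforcing : Tendsto (fun r => r ^ (2 * (k : ℝ)) * u r ^ (p - k)) atTop (nhds 0))
    {m a : ℝ} (hm0 : 0 ≤ m) (hm : k * m < (n : ℝ) - 2 * k) (ha : 0 < a) :
    ∀ᶠ r in atTop, fluxRatio n k u r ≤ m ^ k →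
      r * deriv (fluxRatio n k u) r < ((n : ℝ) - 2 * k - k * m) * (a - fluxRatio n k u r) := by
  have hκ : 0 < (n : ℝ) - 2 * k - k * m := sub_pos.2 hm
  have hlim : Tendsto (fun r => c * (r ^ (2 * (k : ℝ)) * u r ^ (p - k))) atTop (nhds 0) := by
    simpa using hforcing.const_mul c
  filter_upwards [hlim.eventually_lt_const (mul_pos hκ ha), hu.eventually_logSlope_pos,
    hu.eventually_fluxRatio_eq_logSlope_pow hk hkn.le, hu.eventually_mul_deriv_fluxRatio_le hkn]
    with r hsmall hy0 hYy hriccati hYm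
  have hym : logSlope u r ≤ m := by
    rwa [hYy, pow_le_pow_iff_left₀ hy0.le hm0 hk.ne'] at hYm
  have hdamp : fluxRatio n k u r * ((n : ℝ) - 2 * k - k * m)
      ≤ fluxRatio n k u r * ((n : ℝ) - 2 * k - k * logSlope u r) := by
    rw [hYy]
    gcongr
  linarith

lemma eventually_logSlope_lt_of_frequently_lt (hu : IsDecreasingSubsolution n k p c u)
    (hk : 0 < k) (hkn : 2 * k < n)
    (hforcing : Tendsto (fun r => r ^ (2 * (k : ℝ)) * u r ^ (p - k)) atTop (nhds 0))
    {m ε : ℝ} (hm0 : 0 < m) (hm : k * m < (n : ℝ) - 2 * k) (hε : 0 < ε)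
    (hfreq : ∃ᶠ r in atTop, logSlope u r < m) : ∀ᶠ r in atTop, logSlope u r < ε := by
  obtain ⟨a, ha0, ha⟩ : ∃ a : ℝ, 0 < a ∧ a < min (ε ^ k) (m ^ k) :=
    exists_between (by positivity)
  have hyY := hu.eventually_fluxRatio_eq_logSlope_pow hk hkn.le
  obtain ⟨R, hR⟩ := ((hu.eventually_differentiableAt_fluxRatio.and
    (hu.eventually_mul_deriv_fluxRatio_lt hk hkn hforcing hm0.le hm ha0))).exists_forall_of_atTop
  obtain ⟨r₁, hym, hr₁, hr₁R, hy0, hYy⟩ := (hfreq.and_eventually ((eventually_gt_atTop 0).and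
    ((eventually_ge_atTop R).and (hu.eventually_logSlope_pos.and hyY)))).exists
  have hY : ∀ᶠ r in atTop, fluxRatio n k u r < ε ^ k :=
    eventually_lt_of_mul_deriv_lt hr₁ (sub_pos.2 hm) (ha.trans_le (min_le_right _ _)).le
      (ha.trans_le (min_le_left _ _)) (fun r hr => (hR r (hr₁R.trans hr)).1)
      (hYy.trans_le (pow_le_pow_left₀ hy0.le hym.le k)) fun r hr => (hR r (hr₁R.trans hr)).2
  filter_upwards [hY, hyY] with r hYr hYyr
  rw [hYyr] at hYr
  exact lt_of_pow_lt_pow_left₀ k hε.le hYr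

lemma frequently_lt_logSlope (hu : IsDecreasingSubsolution n k p c u) {α : ℝ}
    (ho : u =o[atTop] fun r : ℝ => r ^ (-α)) : ∃ᶠ r in atTop, α < logSlope u r := by
  refine fun hle => isLittleO_irrefl (hu.eventually_pos.mono fun r hr => hr.ne').frequently
    (ho.trans_isBigO ?_)
  exact rpow_neg_isBigO_of_logSlope_le hu.eventually_pos hu.eventually_differentiableAt
    (hle.mono fun r => le_of_not_gt)

lemma eventually_le_logSlope (hu : IsDecreasingSubsolution n k p c u) (hk : 0 < k)
    (hkn : 2 * k < n) (hkp : k < p) (ho : u =o[atTop] fun r : ℝ => r ^ (-(2 * (k : ℝ) / (p - k))))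
    {m : ℝ} (hm0 : 0 < m) (hm : k * m < (n : ℝ) - 2 * k) :
    ∀ᶠ r in atTop, m ≤ logSlope u r := by
  have hpk : 0 < p - k := sub_pos.2 hkp
  have hα : 0 < 2 * (k : ℝ) / (p - k) := by positivity
  by_contra! hfreq
  refine hu.frequently_lt_logSlope ho ?_
  filter_upwards [hu.eventually_logSlope_lt_of_frequently_lt hk hkn
    (tendsto_rpow_mul_rpow_of_isLittleO hpk ho) hm0 hm hα hfreq]
    with r hr using hr.not_gt

lemma flux_isBigO_one (hu : IsDecreasingSubsolution n k p c u) (hn : 0 < n) (hp : 0 < p) {m : ℝ}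
    (hm : n / p < m) (hum : u =O[atTop] fun r : ℝ => r ^ (-m)) :
    flux n k u =O[atTop] fun _ => (1 : ℝ) := by
  have hrhs : (fun r => c * (r ^ (n - 1) * u r ^ p)) =O[atTop]
      fun r : ℝ => r ^ (-(m * p - n) - 1) := by
    have hnonneg : (0 : ℝ → ℝ) ≤ᶠ[atTop] fun r : ℝ => r ^ (-m) := by
      filter_upwards [eventually_ge_atTop 0] with r hr using rpow_nonneg hr _
    refine (((isBigO_refl _ _).mul (hum.rpow hp.le hnonneg)).const_mul_left c).congr' .rfl ?_
    filter_upwards [eventually_gt_atTop 0] with r hr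
    rw [← rpow_mul hr.le, ← rpow_natCast, ← rpow_add hr, Nat.cast_pred hn]
    ring_nf
  have hbdd : IsBoundedUnder (· ≤ ·) atTop fun r => -flux n k u r := by
    refine isBoundedUnder_le_of_deriv_le (sub_pos.2 ((div_lt_iff₀ hp).1 hm)) ?_ ?_ hrhs
    · exact hu.eventually_differentiableAt_flux.mono fun r hr => hr.neg
    · simpa only [deriv.fun_neg] using hu.eventually_neg_deriv_flux_le
  refine (isBigO_one_iff ℝ).2 (hbdd.mono_le ?_)
  filter_upwards [hu.eventually_deriv_neg, eventually_gt_atTop 0] with r hneg hr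
  rw [Real.norm_eq_abs, abs_of_neg ((flux_neg_iff hr).2 hneg)]

end IsDecreasingSubsolution

/-! ### Regular solutions -/

lemma binomC_pos {n k : ℕ} (hkn : k ≤ n) : 0 < binomC n k :=
  Nat.cast_pos.2 (Nat.choose_pos (Nat.sub_le_sub_right hkn 1))

namespace IsRegularSolution

variable {n k : ℕ} {p ρ : ℝ} {u : ℝ → ℝ}

lemma deriv_neg (hu : IsRegularSolution n k p ρ u) (hk : 0 < k) (hkn : k ≤ n) {r : ℝ}
    (hr : 0 < r) : deriv u r < 0 := by
  -- `flux n k u` may be discontinuous at `0`, where `deriv u` is two-sided.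
  set D := derivWithin u (Ici 0)
  set w : ℝ → ℝ := fun t => t ^ (n - k) * |D t| ^ (k - 1) * D t with hw
  have hD : ContinuousOn D (Ici 0) :=
    hu.contDiffOn.continuousOn_derivWithin (uniqueDiffOn_Ici 0) le_rfl
  have hw_cont : ContinuousOn w (Ici 0) := by fun_prop
  have hw_flux : EqOn w (flux n k u) (Ioi 0) := fun t ht => by
    have : D t = deriv u t := derivWithin_of_mem_nhds (Ici_mem_nhds ht)
    simp only [hw, flux, this]
  have hw_anti : StrictAntiOn w (Ici 0) := by
    refine strictAntiOn_of_deriv_neg (convex_Ici 0) hw_cont fun t ht => ?_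
    rw [interior_Ici] at ht
    have ht0 : 0 < t := ht
    have := hu.pos t ht0.le
    have := binomC_pos hkn
    rw [(hw_flux.eventuallyEq_of_mem (Ioi_mem_nhds ht0)).deriv_eq, (hu.eqn t ht0).deriv,
      neg_mul, neg_mul, neg_lt_zero]
    positivity
  have hw_zero : w 0 = 0 := by
    simp only [hw, D, hu.deriv_zero, mul_zero]
  rw [← flux_neg_iff hr (n := n) (k := k), ← hw_flux hr, ← hw_zero]
  exact hw_anti self_mem_Ici hr.le hr

lemma isDecreasingSubsolution (hu : IsRegularSolution n k p ρ u) (hk : 0 < k) (hkn : k ≤ n) :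
    IsDecreasingSubsolution n k p (k / binomC n k) u where
  eventually_pos := (eventually_ge_atTop 0).mono hu.pos
  eventually_deriv_neg := (eventually_gt_atTop 0).mono fun _ => hu.deriv_neg hk hkn
  eventually_differentiableAt_flux :=
    (eventually_gt_atTop 0).mono fun r hr => (hu.eqn r hr).differentiableAt
  eventually_neg_deriv_flux_le := (eventually_gt_atTop 0).mono fun r hr => by
    rw [(hu.eqn r hr).deriv]
    exact le_of_eq (by ring)

end IsRegularSolution

theorem littleO_improvement_general {n k : ℕ} {p c : ℝ} {u : ℝ → ℝ} (hk : 0 < k)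
    (hkn : 2 * k < n) (hkp : k < p) (hu : IsDecreasingSubsolution n k p c u)
    (ho : u =o[atTop] fun r : ℝ => r ^ (-(2 * (k : ℝ) / (p - k)))) :
    u =O[atTop] fun r : ℝ => r ^ ((2 * (k : ℝ) - n) / k) := by
  have hk' : (0 : ℝ) < k := Nat.cast_pos.2 hk
  have hd : 0 < (n : ℝ) - 2 * k := sub_pos.2 (mod_cast hkn)
  have hp : 0 < p := hk'.trans hkp
  have hβ : (2 * (k : ℝ) - n) / k = -(((n : ℝ) - 2 * k) / k) := by ring
  rw [hβ]
  -- If `d/k ≤ n/p`, then `2k/(p-k) ≥ d/k` and the assumed decay is already the claimed one.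
  rcases le_or_gt (((n : ℝ) - 2 * k) / k) (n / p) with hsub | hsup
  · refine ho.isBigO.trans (isBigO_rpow_rpow_atTop (neg_le_neg ?_))
    rw [div_le_div_iff₀ hk' hp] at hsub
    rw [div_le_div_iff₀ hk' (sub_pos.2 hkp)]
    linarith
  obtain ⟨m, hnm, hmβ⟩ := exists_between hsup
  have hm0 : 0 < m := (by positivity : 0 ≤ n / p).trans_lt hnm
  have hum : u =O[atTop] fun r : ℝ => r ^ (-m) :=
    isBigO_rpow_neg_of_le_logSlope hu.eventually_pos hu.eventually_differentiableAt
      (hu.eventually_le_logSlope hk hkn hkp ho hm0 ((lt_div_iff₀' hk').1 hmβ))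
  have hu' := deriv_isBigO_of_flux_isBigO_one hk (by omega)
    (hu.flux_isBigO_one (by omega) hp hnm hum)
  rw [show -(((n : ℝ) - k) / k) = -(((n : ℝ) - 2 * k) / k) - 1 by field_simp; ring] at hu'
  exact isBigO_rpow_neg_of_deriv_isBigO (by positivity) hu.eventually_differentiableAt hu'
    (hum.trans_tendsto (tendsto_rpow_neg_atTop hm0))

/-- if `u(r) = o(r^{-2k/(p-k)})`, then `u(r) = O(r^{(2k-n)/k})`. -/
theorem littleO_improvement (n k : ℕ) (p ρ : ℝ) (u : ℝ → ℝ)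
    (hn : 3 ≤ n) (hk1 : 1 < k) (hk2 : 2 * k < n) (hρ : 0 < ρ)
    (hp : (n : ℝ) * k / ((n : ℝ) - 2 * k) < p)
    (hu : IsRegularSolution n k p ρ u)
    (ho : u =o[atTop] fun r : ℝ => r ^ (-(2 * (k : ℝ) / (p - k)))) :
    u =O[atTop] fun r : ℝ => r ^ ((2 * (k : ℝ) - n) / k) := by
  have hkp : k < p := (lt_mul_div_sub_two_mul (by positivity) (mod_cast hk2)).trans hp
  exact littleO_improvement_general (by omega) hk2 hkp
    (hu.isDecreasingSubsolution (by omega) (by omega)) ho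

end KHessianPaper
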